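/- Assume the quenched kernels Q_ω are strongly irreducible uniformly in ω: there exist ε > 0 and N ∈ ℕ such that for all x ∈ ℤ^d, all ω ∈ Ω and all e ∈ ℤ^d with ‖e‖₂ = 1, one has Q_ω^n(x,x+e) ≥ ε for some n ≤ N. Then there exists a constant C₁ > 0, not depending on ω, such that for all ω ∈ Ω, all n ≥ 1 and all x,y ∈ ℤ^d, Q_ω^n(x,y) ≤ C₁ M(T_y ω) n^{−d/2}. -/

import Mathlib

open scoped Classical

noncomputable section

/-- Points of `ℤ^d`. -/
abbrev Zd (d : ℕ) := Fin d → ℤ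

/-- Euclidean norm on `ℤ^d`. -/
def eucNorm {d : ℕ} (v : Zd d) : ℝ := Real.sqrt (∑ i, ((v i : ℝ)) ^ 2)

/-- `M(ω) = Σ_i Σ_x W_i(T_x ω) · 1{0 ∈ C_i + x}`, where the `i`-th cycle is
`C_i = (z i 0, …, z i (n i))`. -/
def Mfun {d K : ℕ} {Ω : Type*} (n : Fin K → ℕ) (z : Fin K → ℕ → Zd d)
    (T : Zd d → Ω → Ω) (W : Fin K → Ω → ℝ) (ω : Ω) : ℝ :=
  ∑ i : Fin K, ∑' x : Zd d, if ∃ j < n i, z i j + x = 0 then W i (T x ω) else 0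

/-- `p_v(ω) = M(ω)⁻¹ Σ_i Σ_x W_i(T_x ω) · 1{(0,v) ∈ C_i + x}`. -/
def pfun {d K : ℕ} {Ω : Type*} (n : Fin K → ℕ) (z : Fin K → ℕ → Zd d)
    (T : Zd d → Ω → Ω) (W : Fin K → Ω → ℝ) (ω : Ω) (v : Zd d) : ℝ :=
  (Mfun n z T W ω)⁻¹ *
    ∑ i : Fin K, ∑' x : Zd d,
      if ∃ j, 1 ≤ j ∧ j ≤ n i ∧ z i (j - 1) + x = 0 ∧ z i j + x = v then W i (T x ω) else 0

/-- `Λ`, the (finite) set of possible jumps. -/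
def Lam {d K : ℕ} (n : Fin K → ℕ) (z : Fin K → ℕ → Zd d) : Finset (Zd d) :=
  Finset.univ.biUnion fun i => (Finset.range (n i)).image fun j => z i (j + 1) - z i j

/-- The quenched transition kernel `Q_ω(x,y) = p_{y-x}(T_x ω)`. -/
def Qker {d K : ℕ} {Ω : Type*} (n : Fin K → ℕ) (z : Fin K → ℕ → Zd d)
    (T : Zd d → Ω → Ω) (W : Fin K → Ω → ℝ) (ω : Ω) (x y : Zd d) : ℝ :=
  pfun n z T W (T x ω) (y - x)

/-- `n`-fold composition of a transition kernel. -/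
def kerpow {d : ℕ} (Q : Zd d → Zd d → ℝ) : ℕ → Zd d → Zd d → ℝ
  | 0 => fun x y => if x = y then 1 else 0
  | m + 1 => fun x y => ∑' zz : Zd d, kerpow Q m x zz * Q zz y

lemma rpow_mul_one_sub_le (d : ℕ) {τ : ℝ} (hτ : 0 < τ) :
    τ ^ (-(d : ℝ) / 2) * (1 - d / 2 / τ) ≤ (τ + 1) ^ (-(d : ℝ) / 2) := by
  have h4 : (1 : ℝ) - d / 2 / τ ≤ (1 + 1 / τ) ^ (-(d : ℝ) / 2) := by
    have hlog : Real.log (1 + 1 / τ) ≤ 1 / τ := by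
      have := Real.log_le_sub_one_of_pos (show 0 < 1 + 1 / τ by positivity)
      linarith
    rw [Real.rpow_def_of_pos (by positivity)]
    refine le_trans ?_ (Real.add_one_le_exp _)
    have h1 : (d : ℝ) / 2 / τ = 1 / τ * (d / 2) := by ring
    have h2 := mul_le_mul_of_nonneg_right hlog (show (0 : ℝ) ≤ d / 2 by positivity)
    rw [h1]
    linarith
  have h5 : τ + 1 = τ * (1 + 1 / τ) := by field_simp
  rw [h5, Real.mul_rpow hτ.le (by positivity)]
  gcongr

/-- A polynomial decay estimate for sequences satisfying a discrete Nash-type differential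
inequality. -/
lemma exists_decay_of_nash_recursion (d : ℕ) (hd : 0 < d) (a b u₀ : ℝ) (ha : 1 ≤ a) (hb : 0 ≤ b)
    (hu₀ : 0 ≤ u₀) :
    ∃ A : ℝ, 0 < A ∧ ∀ u : ℕ → ℝ, (∀ k, 0 ≤ u k) → (∀ k, u k ≤ u₀) →
      (∀ k r : ℕ, 1 ≤ r →
        u k ≤ a * (r : ℝ) ^ 2 * (u k - u (k + 1)) + b * ((r : ℝ) ^ d)⁻¹) →
      ∀ k : ℕ, u k ≤ A * ((k : ℝ) + 1) ^ (-(d : ℝ) / 2) := by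
  have hd' : (1 : ℝ) ≤ d := by exact_mod_cast hd
  set T : ℝ := a * d with hT
  have hT1 : 1 ≤ T := by nlinarith
  set A₁ : ℝ := u₀ * (T + 1) ^ ((d : ℝ) / 2) with hA₁
  set B : ℝ := b / a * (4 * T) * (4 * T) ^ ((d : ℝ) / 2) with hB
  have hA₁0 : 0 ≤ A₁ := by positivity
  have hB0 : 0 ≤ B := by positivity
  refine ⟨A₁ + 2 * B + 1, by positivity, fun u hu0 hu hrec k => ?_⟩
  set A : ℝ := A₁ + 2 * B + 1 with hA
  have hsmall : ∀ k : ℕ, (k : ℝ) ≤ T → u k ≤ A * ((k : ℝ) + 1) ^ (-(d : ℝ) / 2) := by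
    intro k hk
    have hk1 : (0 : ℝ) < (k : ℝ) + 1 := by positivity
    rw [neg_div, Real.rpow_neg hk1.le, ← div_eq_mul_inv, le_div_iff₀ (by positivity)]
    calc u k * ((k : ℝ) + 1) ^ ((d : ℝ) / 2)
        ≤ u₀ * (T + 1) ^ ((d : ℝ) / 2) := by
          gcongr
          exact hu k
      _ ≤ A := by rw [hA, ← hA₁]; linarith
  induction k with
  | zero => exact hsmall 0 (by simp; linarith)
  | succ j ih =>
    by_cases hj : ((j + 1 : ℕ) : ℝ) ≤ T
    · exact hsmall _ hj
    push Not at hj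
    push_cast at hj ⊢
    set τ : ℝ := (j : ℝ) + 1 with hτ
    have hτ0 : 0 < τ := by positivity
    set r : ℕ := ⌊Real.sqrt (τ / T)⌋₊ with hr
    have hq : 1 ≤ τ / T := by rw [le_div_iff₀ (by linarith)]; linarith
    have hs1 : 1 ≤ Real.sqrt (τ / T) := by rwa [Real.one_le_sqrt]
    have hr1 : 1 ≤ r := by rw [hr, Nat.one_le_floor_iff]; exact hs1
    have hr1' : (1 : ℝ) ≤ r := by exact_mod_cast hr1
    have hrle : (r : ℝ) ≤ Real.sqrt (τ / T) := Nat.floor_le (Real.sqrt_nonneg _)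
    have hrge : Real.sqrt (τ / T) < r + 1 := Nat.lt_floor_add_one _
    have hsq : Real.sqrt (τ / T) ^ 2 = τ / T := Real.sq_sqrt (by positivity)
    have hr2le : (r : ℝ) ^ 2 ≤ τ / T := by rw [← hsq]; gcongr
    have hr2ge : τ / (4 * T) ≤ (r : ℝ) ^ 2 := by
      have : τ / (4 * T) = (τ / T) / 4 := by field_simp
      rw [this, ← hsq]
      nlinarith [Real.sqrt_nonneg (τ / T)]
    have hpos4 : 0 < τ / (4 * T) := by positivity
    have hinv2 : ((r : ℝ) ^ 2)⁻¹ ≤ 4 * T / τ := by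
      rw [← inv_div]; gcongr
    have hinvd : ((r : ℝ) ^ d)⁻¹ ≤ (4 * T) ^ ((d : ℝ) / 2) * τ ^ (-(d : ℝ) / 2) := by
      have h1 : (r : ℝ) ^ d = ((r : ℝ) ^ 2) ^ ((d : ℝ) / 2) := by
        rw [← Real.rpow_natCast, ← Real.rpow_natCast, ← Real.rpow_mul (by positivity)]
        congr 1; push_cast; ring
      have h2 : (4 * T) ^ ((d : ℝ) / 2) * τ ^ (-(d : ℝ) / 2)
          = ((τ / (4 * T)) ^ ((d : ℝ) / 2))⁻¹ := by
        rw [Real.div_rpow hτ0.le (by positivity), inv_div, neg_div, Real.rpow_neg hτ0.le,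
          ← div_eq_mul_inv]
      rw [h1, h2]; gcongr
    have hrec' := hrec j r hr1
    have har : 0 < a * (r : ℝ) ^ 2 := by positivity
    have hstep : u (j + 1) ≤ u j - u j / (a * (r : ℝ) ^ 2)
        + b / a * ((r : ℝ) ^ 2)⁻¹ * ((r : ℝ) ^ d)⁻¹ := by
      have h1 : u j / (a * (r : ℝ) ^ 2)
          ≤ (u j - u (j + 1)) + b / a * ((r : ℝ) ^ 2)⁻¹ * ((r : ℝ) ^ d)⁻¹ := by
        rw [div_le_iff₀ har]
        refine hrec'.trans (le_of_eq ?_)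
        field_simp
      linarith
    have hdis : u j * (d / τ) ≤ u j / (a * (r : ℝ) ^ 2) := by
      rw [div_eq_mul_inv (u j)]
      have : (d : ℝ) / τ ≤ (a * (r : ℝ) ^ 2)⁻¹ := by
        rw [← one_div, div_le_div_iff₀ hτ0 har]
        have : (r : ℝ) ^ 2 * T ≤ τ := by rwa [le_div_iff₀ (by linarith)] at hr2le
        rw [hT] at this
        nlinarith
      exact mul_le_mul_of_nonneg_left this (hu0 j)
    have hdτ : (d : ℝ) / τ ≤ 1 := by
      rw [div_le_one hτ0]; nlinarith
    set σ : ℝ := τ ^ (-(d : ℝ) / 2) with hσ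
    have hσ0 : 0 < σ := by positivity
    have hsrc : b / a * ((r : ℝ) ^ 2)⁻¹ * ((r : ℝ) ^ d)⁻¹ ≤ B * σ / τ := by
      calc b / a * ((r : ℝ) ^ 2)⁻¹ * ((r : ℝ) ^ d)⁻¹
          ≤ b / a * (4 * T / τ) * ((4 * T) ^ ((d : ℝ) / 2) * σ) := by gcongr
        _ = B * σ / τ := by rw [hB]; ring
    have hmain : u (j + 1) ≤ A * (σ * (1 - d / 2 / τ)) := by
      have h1 : u j * (1 - d / τ) ≤ A * σ * (1 - d / τ) :=
        mul_le_mul_of_nonneg_right ih (by linarith)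
      have h2 : B * σ / τ ≤ A * σ * (d / 2 / τ) := by
        have hBA : B ≤ A * (1 / 2) := by rw [hA]; linarith
        have : B ≤ A * (d / 2) := hBA.trans (by gcongr)
        calc B * σ / τ ≤ A * (d / 2) * σ / τ := by gcongr
          _ = _ := by ring
      have h3 : A * σ * (1 - d / τ) + A * σ * (d / 2 / τ) = A * (σ * (1 - d / 2 / τ)) := by
        field_simp; ring
      linarith
    refine hmain.trans ?_
    gcongr
    exact rpow_mul_one_sub_le d hτ0

lemma hasFiniteSupport_sq {V : Type*} {f : V → ℝ} (hf : f.HasFiniteSupport) :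
    (fun x => f x ^ 2).HasFiniteSupport := by
  simp only [sq]; fun_prop

/-- Squared `ℓ²` norm of the increment of `g` in direction `v`. -/
def incr {d : ℕ} (g : Zd d → ℝ) (v : Zd d) : ℝ := ∑' x, (g (x + v) - g x) ^ 2

lemma hasFiniteSupport_comp_add {d : ℕ} {g : Zd d → ℝ} (hg : g.HasFiniteSupport) (v : Zd d) :
    (fun x => g (x + v)).HasFiniteSupport :=
  hg.fun_comp_of_injective (add_left_injective v)

lemma hasFiniteSupport_incr {d : ℕ} {g : Zd d → ℝ} (hg : g.HasFiniteSupport) (v : Zd d) :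
    (fun x => (g (x + v) - g x) ^ 2).HasFiniteSupport :=
  hasFiniteSupport_sq ((hasFiniteSupport_comp_add hg v).fun_sub hg)

lemma incr_nonneg {d : ℕ} (g : Zd d → ℝ) (v : Zd d) : 0 ≤ incr g v :=
  tsum_nonneg fun _ => sq_nonneg _

lemma incr_add_le {d : ℕ} {g : Zd d → ℝ} (hg : g.HasFiniteSupport) (v w : Zd d) {t : ℝ}
    (ht : 0 < t) : incr g (v + w) ≤ (1 + t⁻¹) * incr g v + (1 + t) * incr g w := by
  have hshift : incr g w = ∑' x, (g (x + v + w) - g (x + v)) ^ 2 :=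
    ((Equiv.addRight v).tsum_eq fun x => (g (x + w) - g x) ^ 2).symm
  have hs : Summable fun x => (g (x + v + w) - g (x + v)) ^ 2 :=
    summable_of_hasFiniteSupport (hasFiniteSupport_comp_add (g := fun x => (g (x + w) - g x) ^ 2)
      (hasFiniteSupport_incr hg w) v)
  have hs' : Summable fun x => (g (x + v) - g x) ^ 2 :=
    summable_of_hasFiniteSupport (hasFiniteSupport_incr hg v)
  rw [hshift, incr, incr, ← tsum_mul_left, ← tsum_mul_left,
    ← (hs'.mul_left _).tsum_add (hs.mul_left _)]
  refine (summable_of_hasFiniteSupport (hasFiniteSupport_incr hg _)).tsum_le_tsum (fun x => ?_)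
    ((hs'.mul_left _).add (hs.mul_left _))
  rw [← add_assoc]
  set p := g (x + v + w) - g (x + v)
  set q := g (x + v) - g x
  have : g (x + v + w) - g x = p + q := by ring
  rw [this]
  have hst : 0 < t⁻¹ := inv_pos.mpr ht
  have hk : t⁻¹ * t = 1 := inv_mul_cancel₀ ht.ne'
  have : 0 ≤ t⁻¹ * (q - t * p) ^ 2 := by positivity
  have e : t⁻¹ * (q - t * p) ^ 2 = t⁻¹ * q ^ 2 - 2 * (t⁻¹ * t) * p * q + (t⁻¹ * t) * t * p ^ 2 := by
    ring
  rw [e, hk] at this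
  nlinarith

lemma incr_sum_le {d : ℕ} {g : Zd d → ℝ} (hg : g.HasFiniteSupport) {ι : Type*} (s : Finset ι)
    (w : ι → Zd d) : incr g (∑ i ∈ s, w i) ≤ s.card * ∑ i ∈ s, incr g (w i) := by
  induction s using Finset.induction_on with
  | empty => simp [incr]
  | insert i s hi ih =>
    rw [Finset.sum_insert hi, Finset.sum_insert hi, Finset.card_insert_of_notMem hi, add_comm (w i)]
    rcases s.eq_empty_or_nonempty with rfl | hs
    · simp
    have hc : (0 : ℝ) < s.card := by exact_mod_cast hs.card_pos
    refine (incr_add_le hg _ _ hc).trans ?_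
    have := mul_le_mul_of_nonneg_left ih (show 0 ≤ 1 + (s.card : ℝ)⁻¹ by positivity)
    have e : (1 + (s.card : ℝ)⁻¹) * (s.card * ∑ i ∈ s, incr g (w i))
        = (s.card + 1) * ∑ i ∈ s, incr g (w i) := by field_simp
    rw [e] at this
    push_cast
    nlinarith

lemma incr_box_le {d r : ℕ} {g : Zd d → ℝ} (hg : g.HasFiniteSupport) (v : Fin d → Fin r) :
    incr g (fun i => ((v i : ℕ) : ℤ)) ≤ d * (r : ℝ) ^ 2 * ∑ i, incr g (Pi.single i 1) := by
  have hv : (fun i => ((v i : ℕ) : ℤ) : Zd d)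
      = ∑ p ∈ Finset.univ.sigma fun i : Fin d => Finset.range (v i : ℕ),
        (Pi.single p.1 1 : Zd d) := by
    rw [Finset.sum_sigma]
    ext j
    simp [Finset.sum_apply, Pi.single_apply]
  rw [hv]
  refine (incr_sum_le hg _ _).trans ?_
  rw [Finset.sum_sigma, Finset.card_sigma]
  have h1 : ((∑ i : Fin d, (Finset.range (v i : ℕ)).card : ℕ) : ℝ) ≤ d * r := by
    have : (∑ i : Fin d, (Finset.range (v i : ℕ)).card) ≤ ∑ _i : Fin d, r :=
      Finset.sum_le_sum fun i _ => by simp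
    calc ((∑ i : Fin d, (Finset.range (v i : ℕ)).card : ℕ) : ℝ) ≤ ((∑ _i : Fin d, r : ℕ) : ℝ) := by
          exact_mod_cast this
      _ = d * r := by simp
  have h2 : (∑ i : Fin d, ∑ _j ∈ Finset.range (v i : ℕ), incr g (Pi.single i 1))
      ≤ r * ∑ i : Fin d, incr g (Pi.single i 1) := by
    rw [Finset.mul_sum]
    refine Finset.sum_le_sum fun i _ => ?_
    rw [Finset.sum_const, Finset.card_range, nsmul_eq_mul]
    refine mul_le_mul_of_nonneg_right ?_ (incr_nonneg _ _)
    exact_mod_cast (v i).2.le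
  have h0 : 0 ≤ ∑ i : Fin d, incr g (Pi.single i 1) :=
    Finset.sum_nonneg fun i _ => incr_nonneg _ _
  calc _ ≤ ((d : ℝ) * r) * (r * ∑ i : Fin d, incr g (Pi.single i 1)) := by
        refine mul_le_mul h1 h2 (Finset.sum_nonneg fun i _ => Finset.sum_nonneg fun _ _ =>
          incr_nonneg _ _) (by positivity)
    _ = _ := by ring

/-- The Nash inequality on `ℤ^d`, in its additive form with a free scale `r`. -/
lemma nash_inequality {d r : ℕ} (hr : 1 ≤ r) {g : Zd d → ℝ} (hg : g.HasFiniteSupport)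
    (hg0 : ∀ x, 0 ≤ g x) :
    ∑' x, g x ^ 2 ≤ 2 * d * (r : ℝ) ^ 2 * ∑ i, incr g (Pi.single i 1)
      + 2 * ((r : ℝ) ^ d)⁻¹ * (∑' x, g x) ^ 2 := by
  set D := ∑ i, incr g (Pi.single i 1)
  set emb : (Fin d → Fin r) → Zd d := fun v i => ((v i : ℕ) : ℤ) with hemb
  have hinj : Function.Injective emb := by
    intro v w h
    ext i
    have := congrFun h i
    simpa [hemb] using this
  have hr0 : (0 : ℝ) < r := by exact_mod_cast hr
  set ρ : ℝ := ((r : ℝ) ^ d)⁻¹ with hρ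
  have hρ0 : 0 < ρ := by positivity
  have hcard : (Fintype.card (Fin d → Fin r) : ℝ) = (r : ℝ) ^ d := by simp
  have hρcard : ρ * (Fintype.card (Fin d → Fin r) : ℝ) = 1 := by
    rw [hcard, hρ, inv_mul_cancel₀ (by positivity)]
  set S := ∑' x, g x with hS
  have hsg : Summable g := summable_of_hasFiniteSupport hg
  set avg : Zd d → ℝ := fun x => ρ * ∑ v, g (x + emb v) with havg
  have havg0 : ∀ x, 0 ≤ avg x := fun x =>
    mul_nonneg hρ0.le (Finset.sum_nonneg fun v _ => hg0 _)
  have hsum_shift : ∀ v, Summable fun x => g (x + emb v) := fun v =>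
    summable_of_hasFiniteSupport (hasFiniteSupport_comp_add hg _)
  have havg_sum : HasSum avg S := by
    have h1 : HasSum (fun x => ∑ v, g (x + emb v)) (∑ _v : Fin d → Fin r, S) :=
      hasSum_sum fun v _ => by
        have := (hsum_shift v).hasSum
        rwa [show ∑' x, g (x + emb v) = S from (Equiv.addRight (emb v)).tsum_eq g] at this
    have h2 := h1.mul_left ρ
    rwa [Finset.sum_const, nsmul_eq_mul, Finset.card_univ, ← mul_assoc, hρcard, one_mul] at h2
  have havg_le : ∀ x, avg x ≤ ρ * S := by
    intro x
    refine mul_le_mul_of_nonneg_left ?_ hρ0.le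
    have hx : Function.Injective fun v => x + emb v := (add_right_injective x).comp hinj
    have hmap := Finset.sum_map Finset.univ ⟨fun v => x + emb v, hx⟩ g
    simp only [Function.Embedding.coeFn_mk] at hmap
    rw [← hmap]
    exact hsg.sum_le_tsum _ fun y _ => hg0 y
  have hpt : ∀ x, g x ^ 2 ≤ 2 * (ρ * ∑ v, (g (x + emb v) - g x) ^ 2) + 2 * (ρ * S * avg x) := by
    intro x
    have h1 : avg x ^ 2 ≤ ρ * S * avg x := by
      rw [sq]; exact mul_le_mul_of_nonneg_right (havg_le x) (havg0 x)
    have h2 : avg x - g x = ρ * ∑ v, (g (x + emb v) - g x) := by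
      rw [Finset.sum_sub_distrib, mul_sub, Finset.sum_const, nsmul_eq_mul, Finset.card_univ,
        ← mul_assoc, hρcard, one_mul]
    have h3 : (avg x - g x) ^ 2 ≤ ρ * ∑ v, (g (x + emb v) - g x) ^ 2 := by
      rw [h2, mul_pow]
      have := sq_sum_le_card_mul_sum_sq (s := Finset.univ)
        (f := fun v : Fin d → Fin r => g (x + emb v) - g x)
      rw [Finset.card_univ] at this
      calc _ ≤ ρ ^ 2 * ((Fintype.card (Fin d → Fin r) : ℝ) * ∑ v, (g (x + emb v) - g x) ^ 2) := by
            gcongr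
        _ = ρ * (ρ * (Fintype.card (Fin d → Fin r) : ℝ)) * ∑ v, (g (x + emb v) - g x) ^ 2 := by
            ring
        _ = _ := by rw [hρcard, mul_one]
    nlinarith [sq_nonneg (2 * avg x - g x)]
  have hsq : Summable fun x => g x ^ 2 :=
    summable_of_hasFiniteSupport (hasFiniteSupport_sq hg)
  have hinc : HasSum (fun x => ∑ v, (g (x + emb v) - g x) ^ 2) (∑ v, incr g (emb v)) :=
    hasSum_sum fun v _ => (summable_of_hasFiniteSupport (hasFiniteSupport_incr hg _)).hasSum
  have htot := ((hinc.mul_left ρ).mul_left 2).add ((havg_sum.mul_left (ρ * S)).mul_left 2)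
  have h1 := hasSum_le hpt hsq.hasSum htot
  have h2 : ρ * ∑ v, incr g (emb v) ≤ d * (r : ℝ) ^ 2 * D := by
    calc ρ * ∑ v, incr g (emb v) ≤ ρ * ∑ _v : Fin d → Fin r, (d * (r : ℝ) ^ 2 * D) := by
          gcongr with v
          exact incr_box_le hg v
      _ = _ := by
          rw [Finset.sum_const, nsmul_eq_mul, Finset.card_univ, ← mul_assoc, hρcard, one_mul]
  nlinarith

/-- A pair of Markov operators with finite range on `V → ℝ`, adjoint to each other with
respect to the measure with weights `μ`. -/
structure IsMarkovPair {V : Type*} (μ : V → ℝ) (P P' : Module.End ℝ (V → ℝ)) : Prop where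
  nonneg : ∀ f, 0 ≤ f → 0 ≤ P f
  nonneg' : ∀ f, 0 ≤ f → 0 ≤ P' f
  one : P 1 = 1
  one' : P' 1 = 1
  finite : ∀ f, f.HasFiniteSupport → (P f).HasFiniteSupport
  finite' : ∀ f, f.HasFiniteSupport → (P' f).HasFiniteSupport
  adjoint : ∀ f g, f.HasFiniteSupport ∨ g.HasFiniteSupport →
    ∑' x, μ x * (f x * P g x) = ∑' x, μ x * (P' f x * g x)

/-- Squared norm in `ℓ²(μ)`. -/
def normSqW {V : Type*} (μ f : V → ℝ) : ℝ := ∑' x, μ x * f x ^ 2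

/-- Variance of `h` under the transition probabilities of `P` started from `x`. -/
def condVar {V : Type*} (P : Module.End ℝ (V → ℝ)) (h : V → ℝ) (x : V) : ℝ :=
  P (h ^ 2) x - P h x ^ 2

lemma hasFiniteSupport_single {V : Type*} [DecidableEq V] (y : V) (a : ℝ) :
    (Pi.single y a : V → ℝ).HasFiniteSupport :=
  (Set.finite_singleton y).subset Pi.support_single_subset

lemma tsum_mul_single {V : Type*} [DecidableEq V] (φ : V → ℝ) (y : V) :
    ∑' x, φ x * (Pi.single y 1 : V → ℝ) x = φ y := by
  rw [tsum_eq_single y fun x hx => by simp [hx]]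
  simp

namespace IsMarkovPair

variable {V : Type*} {μ : V → ℝ} {P P' R R' : Module.End ℝ (V → ℝ)}

lemma symm (H : IsMarkovPair μ P P') : IsMarkovPair μ P' P where
  nonneg := H.nonneg'
  nonneg' := H.nonneg
  one := H.one'
  one' := H.one
  finite := H.finite'
  finite' := H.finite
  adjoint f g h := by
    simpa only [mul_comm] using (H.adjoint g f h.symm).symm

lemma mul (H : IsMarkovPair μ P P') (H₂ : IsMarkovPair μ R R') :
    IsMarkovPair μ (P * R) (R' * P') where
  nonneg f hf := H.nonneg _ (H₂.nonneg f hf)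
  nonneg' f hf := H₂.nonneg' _ (H.nonneg' f hf)
  one := by rw [Module.End.mul_apply, H₂.one, H.one]
  one' := by rw [Module.End.mul_apply, H.one', H₂.one']
  finite f hf := H.finite _ (H₂.finite f hf)
  finite' f hf := H₂.finite' _ (H.finite' f hf)
  adjoint f g h := by
    rw [Module.End.mul_apply, Module.End.mul_apply, H.adjoint _ _ (h.imp_right (H₂.finite g)),
      H₂.adjoint _ _ (h.imp_left (H.finite' f))]

lemma pow (H : IsMarkovPair μ P P') (k : ℕ) : IsMarkovPair μ (P ^ k) (P' ^ k) := by
  induction k with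
  | zero => exact ⟨fun _ h => h, fun _ h => h, rfl, rfl, fun _ h => h, fun _ h => h,
      fun _ _ _ => rfl⟩
  | succ k ih =>
    rw [pow_succ, pow_succ']
    exact ih.mul H

lemma mono (H : IsMarkovPair μ P P') {f g : V → ℝ} (h : f ≤ g) : P f ≤ P g := by
  have := H.nonneg (g - f) (sub_nonneg.mpr h)
  rwa [map_sub, sub_nonneg] at this

lemma tsum_apply (H : IsMarkovPair μ P P') {f : V → ℝ} (hf : f.HasFiniteSupport) :
    ∑' x, μ x * P f x = ∑' x, μ x * f x := by
  simpa [H.one'] using H.adjoint 1 f (Or.inr hf)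

lemma mul_apply_single [DecidableEq V] (H : IsMarkovPair μ P P')
    (x y : V) :
    μ x * P (Pi.single y 1) x = μ y * P' (Pi.single x 1) y := by
  have := H.adjoint (Pi.single x 1) (Pi.single y 1) (Or.inl (hasFiniteSupport_single x 1))
  have h1 : ∀ z, μ z * ((Pi.single x 1 : V → ℝ) z * P (Pi.single y 1) z)
      = (μ z * P (Pi.single y 1) z) * (Pi.single x 1 : V → ℝ) z := fun z => by ring
  have h2 : ∀ z, μ z * (P' (Pi.single x 1) z * (Pi.single y 1 : V → ℝ) z)
      = (μ z * P' (Pi.single x 1) z) * (Pi.single y 1 : V → ℝ) z := fun z => by ring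
  simp only [h1, h2] at this
  rwa [tsum_mul_single, tsum_mul_single] at this

lemma single_mul_sq_le_condVar [DecidableEq V] (H : IsMarkovPair μ P P') (h : V → ℝ) (x y : V) :
    P (Pi.single y 1) x * (h y - P h x) ^ 2 ≤ condVar P h x := by
  set a := P h x with ha
  have h1 : ((h y - a) ^ 2) • (Pi.single y 1 : V → ℝ) ≤ h ^ 2 - (2 * a) • h + (a ^ 2) • 1 := by
    intro z
    have e : (h ^ 2 - (2 * a) • h + (a ^ 2) • (1 : V → ℝ)) z = (h z - a) ^ 2 := by
      simp; ring
    rw [e]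
    by_cases hz : z = y
    · subst hz; simp
    · simp [hz]; positivity
  have h2 := H.mono h1 x
  simp only [map_add, map_sub, map_smul, H.one, Pi.add_apply, Pi.sub_apply, Pi.smul_apply,
    smul_eq_mul, Pi.one_apply, ← ha] at h2
  rw [condVar, ← ha]
  linarith

lemma condVar_nonneg (H : IsMarkovPair μ P P') (h : V → ℝ) (x : V) : 0 ≤ condVar P h x :=
  (mul_nonneg (H.nonneg _ (by simp) x) (sq_nonneg _)).trans (H.single_mul_sq_le_condVar h x x)

lemma hasSum_condVar (H : IsMarkovPair μ P P') {h : V → ℝ} (hh : h.HasFiniteSupport) :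
    HasSum (fun x => μ x * condVar P h x) (normSqW μ h - normSqW μ (P h)) := by
  have hh2 : (h ^ 2).HasFiniteSupport := hasFiniteSupport_sq hh
  have h1 : Summable fun x => μ x * P (h ^ 2) x :=
    summable_of_hasFiniteSupport (Function.HasFiniteSupport.mul_right _ (H.finite _ hh2))
  have h2 : Summable fun x => μ x * P h x ^ 2 :=
    summable_of_hasFiniteSupport
      (Function.HasFiniteSupport.mul_right _ (hasFiniteSupport_sq (H.finite _ hh)))
  have h3 := h1.hasSum.sub h2.hasSum
  rw [H.tsum_apply hh2] at h3
  simpa only [condVar, mul_sub, normSqW, Pi.pow_apply] using h3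

lemma normSqW_apply_le (H : IsMarkovPair μ P P') (hμ : ∀ x, 0 ≤ μ x) {h : V → ℝ}
    (hh : h.HasFiniteSupport) : normSqW μ (P h) ≤ normSqW μ h := by
  have := (H.hasSum_condVar hh).nonneg fun x => mul_nonneg (hμ x) (H.condVar_nonneg h x)
  linarith

lemma normSqW_pow_antitone (H : IsMarkovPair μ P P') (hμ : ∀ x, 0 ≤ μ x) {h : V → ℝ}
    (hh : h.HasFiniteSupport) : Antitone fun k => normSqW μ ((P ^ k) h) :=
  antitone_nat_of_succ_le fun k => by
    rw [pow_succ', Module.End.mul_apply]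
    exact H.normSqW_apply_le hμ ((H.pow k).finite _ hh)

/-- Pointwise control of the increments of `∑_{r<L} P^r f` by conditional variances, for a kernel
whose `L`-th power is lazy. -/
lemma sq_sub_le_sum_condVar [DecidableEq V] (H : IsMarkovPair μ P P') {L N k : ℕ} {κ : ℝ}
    (hκ : 0 < κ) (hk : k ≤ N)
    {x y : V} (hlazy : κ ≤ (P ^ L) (Pi.single x 1) x) (hxy : κ ≤ (P ^ k) (Pi.single y 1) x)
    (f : V → ℝ) :
    (∑ r ∈ Finset.range L, (P ^ r) f y - ∑ r ∈ Finset.range L, (P ^ r) f x) ^ 2 ≤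
      2 * (L + N) * κ⁻¹ * (∑ r ∈ Finset.range L, ∑ j ∈ Finset.range (N + 1),
          condVar (P ^ j) ((P ^ r) f) x
        + ∑ j ∈ Finset.range N, condVar (P ^ L) ((P ^ j) f) x) := by
  have hvar : ∀ (l : ℕ) (w : V) (h : V → ℝ), κ ≤ (P ^ l) (Pi.single w 1) x →
      (h w - (P ^ l) h x) ^ 2 ≤ κ⁻¹ * condVar (P ^ l) h x := fun l w h hw => by
    rw [← div_eq_inv_mul, le_div_iff₀ hκ, mul_comm]
    exact (mul_le_mul_of_nonneg_right hw (sq_nonneg _)).trans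
      ((H.pow l).single_mul_sq_le_condVar h x w)
  have hswap : ∑ r ∈ Finset.range L, (P ^ (k + r)) f x - ∑ r ∈ Finset.range L, (P ^ r) f x
      = ∑ j ∈ Finset.range k, ((P ^ (L + j)) f x - (P ^ j) f x) := by
    have h1 := Finset.sum_range_add (fun r => (P ^ r) f x) k L
    have h2 := Finset.sum_range_add (fun r => (P ^ r) f x) L k
    rw [Finset.sum_sub_distrib]
    rw [add_comm k L] at h1
    linarith
  have hdec : ∑ r ∈ Finset.range L, (P ^ r) f y - ∑ r ∈ Finset.range L, (P ^ r) f x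
      = ∑ r ∈ Finset.range L, ((P ^ r) f y - (P ^ (k + r)) f x)
        - ∑ j ∈ Finset.range k, ((P ^ j) f x - (P ^ (L + j)) f x) := by
    have h3 : ∑ j ∈ Finset.range k, ((P ^ j) f x - (P ^ (L + j)) f x)
        = - ∑ j ∈ Finset.range k, ((P ^ (L + j)) f x - (P ^ j) f x) := by
      rw [← Finset.sum_neg_distrib]; simp
    rw [h3, ← hswap, Finset.sum_sub_distrib]
    ring
  set S₁ := ∑ r ∈ Finset.range L, ∑ j ∈ Finset.range (N + 1), condVar (P ^ j) ((P ^ r) f) x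
  set S₂ := ∑ j ∈ Finset.range N, condVar (P ^ L) ((P ^ j) f) x
  have hA : (∑ r ∈ Finset.range L, ((P ^ r) f y - (P ^ (k + r)) f x)) ^ 2 ≤ L * (κ⁻¹ * S₁) := by
    refine sq_sum_le_card_mul_sum_sq.trans ?_
    rw [Finset.card_range, Finset.mul_sum (a := κ⁻¹)]
    gcongr with r hr
    rw [pow_add, Module.End.mul_apply]
    refine (hvar k y _ hxy).trans ?_
    gcongr
    exact Finset.single_le_sum (f := fun j => condVar (P ^ j) ((P ^ r) f) x)
      (fun j _ => (H.pow j).condVar_nonneg _ x) (Finset.mem_range.mpr (by omega))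
  have hB : (∑ j ∈ Finset.range k, ((P ^ j) f x - (P ^ (L + j)) f x)) ^ 2 ≤ N * (κ⁻¹ * S₂) := by
    refine sq_sum_le_card_mul_sum_sq.trans ?_
    rw [Finset.card_range, Finset.mul_sum (a := κ⁻¹)]
    refine mul_le_mul (by exact_mod_cast hk) ?_ (Finset.sum_nonneg fun _ _ => sq_nonneg _)
      (Nat.cast_nonneg N)
    refine le_trans (Finset.sum_le_sum fun j _ => ?_)
      (Finset.sum_le_sum_of_subset_of_nonneg (Finset.range_mono hk) fun j _ _ =>
        mul_nonneg (inv_nonneg.mpr hκ.le) ((H.pow L).condVar_nonneg _ x))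
    rw [pow_add, Module.End.mul_apply]
    exact hvar L x _ hlazy
  have hS₁ : 0 ≤ κ⁻¹ * S₁ := mul_nonneg (inv_nonneg.mpr hκ.le) (Finset.sum_nonneg fun r _ =>
    Finset.sum_nonneg fun j _ => (H.pow j).condVar_nonneg _ x)
  have hS₂ : 0 ≤ κ⁻¹ * S₂ := mul_nonneg (inv_nonneg.mpr hκ.le) (Finset.sum_nonneg fun j _ =>
    (H.pow L).condVar_nonneg _ x)
  rw [hdec]
  set a := ∑ r ∈ Finset.range L, ((P ^ r) f y - (P ^ (k + r)) f x)
  set b := ∑ j ∈ Finset.range k, ((P ^ j) f x - (P ^ (L + j)) f x)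
  have hab : (a - b) ^ 2 ≤ 2 * a ^ 2 + 2 * b ^ 2 := by nlinarith [sq_nonneg (a + b)]
  have e : 2 * (L + N) * κ⁻¹ * (S₁ + S₂) = 2 * (L * (κ⁻¹ * S₁)) + 2 * (N * (κ⁻¹ * S₂))
      + 2 * (L * (κ⁻¹ * S₂)) + 2 * (N * (κ⁻¹ * S₁)) := by ring
  have h4 : 0 ≤ 2 * ((L : ℝ) * (κ⁻¹ * S₂)) := by positivity
  have h5 : 0 ≤ 2 * ((N : ℝ) * (κ⁻¹ * S₁)) := by positivity
  linarith

/-- The Dirichlet form in a direction `e` of `∑_{r<L} P^r f` is controlled by the dissipation of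
the `ℓ²(μ)` norm. -/
lemma incr_sum_pow_le {d : ℕ} {μ : Zd d → ℝ} {P P' : Module.End ℝ (Zd d → ℝ)}
    (H : IsMarkovPair μ P P') {L N : ℕ} {c κ : ℝ} (hc : 0 < c) (hμ : ∀ x, c ≤ μ x) (hκ : 0 < κ)
    (hlazy : ∀ x, κ ≤ (P ^ L) (Pi.single x 1) x) (e : Zd d)
    (hirr : ∀ x, ∃ k ≤ N, κ ≤ (P ^ k) (Pi.single (x + e) 1) x)
    {f : Zd d → ℝ} (hf : f.HasFiniteSupport) :
    incr (fun x => ∑ r ∈ Finset.range L, (P ^ r) f x) e ≤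
      c⁻¹ * (2 * (L + N) * κ⁻¹) * (L * (N + 1) + N) *
        (normSqW μ f - normSqW μ ((P ^ (L + N)) f)) := by
  have hμ0 : ∀ x, 0 ≤ μ x := fun x => hc.le.trans (hμ x)
  have hfin : ∀ r, ((P ^ r) f).HasFiniteSupport := fun r => (H.pow r).finite f hf
  set Δ := normSqW μ f - normSqW μ ((P ^ (L + N)) f) with hΔ
  have hdiss : ∀ r l, r + l ≤ L + N →
      normSqW μ ((P ^ r) f) - normSqW μ ((P ^ l) ((P ^ r) f)) ≤ Δ := by
    intro r l hrl
    rw [← Module.End.mul_apply, ← pow_add]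
    have h1 := H.normSqW_pow_antitone hμ0 hf (show l + r ≤ L + N by omega)
    have h2 := H.normSqW_pow_antitone hμ0 hf (Nat.zero_le r)
    simp only [pow_zero, Module.End.one_apply] at h1 h2
    rw [hΔ]
    linarith
  set G : Zd d → ℝ := fun x => ∑ r ∈ Finset.range L, ∑ j ∈ Finset.range (N + 1),
          condVar (P ^ j) ((P ^ r) f) x
        + ∑ j ∈ Finset.range N, condVar (P ^ L) ((P ^ j) f) x with hG
  have hGsum : HasSum (fun x => μ x * G x)
      (∑ r ∈ Finset.range L, ∑ j ∈ Finset.range (N + 1),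
          (normSqW μ ((P ^ r) f) - normSqW μ ((P ^ j) ((P ^ r) f)))
        + ∑ j ∈ Finset.range N, (normSqW μ ((P ^ j) f) - normSqW μ ((P ^ L) ((P ^ j) f)))) := by
    simp only [hG, mul_add, Finset.mul_sum]
    exact (hasSum_sum fun r _ => hasSum_sum fun j _ => (H.pow j).hasSum_condVar (hfin r)).add
      (hasSum_sum fun j _ => (H.pow L).hasSum_condVar (hfin j))
  have hGle : ∑ r ∈ Finset.range L, ∑ j ∈ Finset.range (N + 1),
          (normSqW μ ((P ^ r) f) - normSqW μ ((P ^ j) ((P ^ r) f)))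
        + ∑ j ∈ Finset.range N, (normSqW μ ((P ^ j) f) - normSqW μ ((P ^ L) ((P ^ j) f)))
      ≤ (L * (N + 1) + N) * Δ := by
    have h1 : ∑ r ∈ Finset.range L, ∑ j ∈ Finset.range (N + 1),
          (normSqW μ ((P ^ r) f) - normSqW μ ((P ^ j) ((P ^ r) f)))
        ≤ ∑ r ∈ Finset.range L, ∑ j ∈ Finset.range (N + 1), Δ :=
      Finset.sum_le_sum fun r hr => Finset.sum_le_sum fun j hj => hdiss r j (by
        rw [Finset.mem_range] at hr hj; omega)
    have h2 : ∑ j ∈ Finset.range N, (normSqW μ ((P ^ j) f) - normSqW μ ((P ^ L) ((P ^ j) f)))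
        ≤ ∑ j ∈ Finset.range N, Δ :=
      Finset.sum_le_sum fun j hj => hdiss j L (by rw [Finset.mem_range] at hj; omega)
    simp only [Finset.sum_const, Finset.card_range, nsmul_eq_mul] at h1 h2
    push_cast at h1 h2
    linarith
  set g : Zd d → ℝ := fun x => ∑ r ∈ Finset.range L, (P ^ r) f x
  have hg : g.HasFiniteSupport := by
    have : g = ∑ r ∈ Finset.range L, (P ^ r) f := by ext x; simp [g]
    rw [this]
    refine Finset.sum_induction _ (fun h : Zd d → ℝ => h.HasFiniteSupport)
      (fun _ _ h₁ h₂ => h₁.add h₂) (Function.hasFiniteSupport_zero) fun r _ => hfin r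
  have hG0 : ∀ x, 0 ≤ G x := fun x => add_nonneg
    (Finset.sum_nonneg fun r _ => Finset.sum_nonneg fun j _ => (H.pow j).condVar_nonneg _ x)
    (Finset.sum_nonneg fun j _ => (H.pow L).condVar_nonneg _ x)
  have hpt : ∀ x, (g (x + e) - g x) ^ 2 ≤ c⁻¹ * (2 * (L + N) * κ⁻¹) * (μ x * G x) := by
    intro x
    obtain ⟨k, hk, hkx⟩ := hirr x
    refine (H.sq_sub_le_sum_condVar hκ hk (hlazy x) hkx f).trans ?_
    change 2 * (L + N) * κ⁻¹ * G x ≤ _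
    have h1 : G x ≤ c⁻¹ * (μ x * G x) := by
      rw [← div_eq_inv_mul, le_div_iff₀ hc, mul_comm]
      exact mul_le_mul_of_nonneg_right (hμ x) (hG0 x)
    calc _ ≤ 2 * (L + N) * κ⁻¹ * (c⁻¹ * (μ x * G x)) := by gcongr
      _ = _ := by ring
  have h3 := hasSum_le hpt (summable_of_hasFiniteSupport (hasFiniteSupport_incr hg e)).hasSum
    (hGsum.mul_left _)
  refine h3.trans ?_
  rw [mul_assoc _ ((L : ℝ) * (N + 1) + N)]
  gcongr

end IsMarkovPair

/-- Uniform `ℓ²` decay for a finite-range Markov operator on `ℤ^d` with bounded invariant weights,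
a lazy power, and uniform irreducibility along the coordinate directions. -/
lemma exists_normSqW_pow_decay (d L N : ℕ) (hd : 0 < d) (hL : 0 < L) {c C κ : ℝ} (hc : 0 < c)
    (hcC : c ≤ C) (hκ : 0 < κ) :
    ∃ A : ℝ, 0 < A ∧ ∀ (μ : Zd d → ℝ) (P P' : Module.End ℝ (Zd d → ℝ)), IsMarkovPair μ P P' →
      (∀ x, c ≤ μ x) → (∀ x, μ x ≤ C) → (∀ x, κ ≤ (P ^ L) (Pi.single x 1) x) →
      (∀ (i : Fin d) (x : Zd d), ∃ k ≤ N, κ ≤ (P ^ k) (Pi.single (x + Pi.single i 1) 1) x) →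
      ∀ (y : Zd d) (k : ℕ),
        normSqW μ ((P ^ k) (Pi.single y 1)) ≤ A * ((k : ℝ) + 1) ^ (-(d : ℝ) / 2) := by
  have hC : 0 < C := hc.trans_le hcC
  set K₀ : ℝ := c⁻¹ * (2 * (L + N) * κ⁻¹) * (L * (N + 1) + N) with hK₀
  have hK₀0 : 0 ≤ K₀ := by positivity
  set b : ℝ := C * (2 * (L * (C / c)) ^ 2) with hb
  obtain ⟨A, hA, hdecay⟩ := exists_decay_of_nash_recursion d hd
    (1 + C * (2 * d * (d * K₀))) b C (by linarith [show 0 ≤ C * (2 * d * (d * K₀)) by positivity])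
    (by positivity) hC.le
  have hB : 0 < L + N := by omega
  have hB' : (0 : ℝ) < ((L + N : ℕ) : ℝ) := by exact_mod_cast hB
  refine ⟨A * ((L + N : ℕ) : ℝ) ^ ((d : ℝ) / 2), by positivity,
    fun μ P P' H hμc hμC hlazy hirr y k => ?_⟩
  have hμ0 : ∀ x, 0 ≤ μ x := fun x => hc.le.trans (hμc x)
  set f : Zd d → ℝ := Pi.single y 1 with hf
  have hffin : f.HasFiniteSupport := hasFiniteSupport_single y 1
  have hf0 : 0 ≤ f := by rw [hf]; simp
  have hanti := H.normSqW_pow_antitone hμ0 hffin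
  have hnormf : normSqW μ f ≤ C := by
    have : ∀ x, μ x * f x ^ 2 = μ x * (Pi.single y 1 : Zd d → ℝ) x := fun x => by
      by_cases h : x = y
      · subst h; simp [hf]
      · simp [hf, h]
    rw [normSqW]
    simp only [this]
    rw [tsum_mul_single]
    exact hμC y
  have hdec := hdecay (fun j => normSqW μ ((P ^ ((L + N) * j)) f))
    (fun j => tsum_nonneg fun x => mul_nonneg (hμ0 x) (sq_nonneg _))
    (fun j => (hanti (Nat.zero_le _)).trans (by simpa using hnormf)) ?_
  · set j := k / (L + N) with hj
    have h1 : normSqW μ ((P ^ k) f) ≤ normSqW μ ((P ^ ((L + N) * j)) f) :=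
      hanti (Nat.mul_div_le k (L + N))
    refine h1.trans ((hdec j).trans ?_)
    rw [mul_assoc]
    gcongr
    have h2 : ((k : ℝ) + 1) / ((L + N : ℕ) : ℝ) ≤ (j : ℝ) + 1 := by
      rw [div_le_iff₀ hB']
      have : k < (j + 1) * (L + N) := by
        rw [hj, mul_comm]; exact Nat.lt_mul_div_succ k hB
      exact_mod_cast this
    calc ((j : ℝ) + 1) ^ (-(d : ℝ) / 2) ≤ (((k : ℝ) + 1) / ((L + N : ℕ) : ℝ)) ^ (-(d : ℝ) / 2) := by
          refine Real.rpow_le_rpow_of_nonpos (by positivity) h2 ?_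
          rw [neg_div]; exact neg_nonpos.mpr (by positivity)
      _ = ((L + N : ℕ) : ℝ) ^ ((d : ℝ) / 2) * ((k : ℝ) + 1) ^ (-(d : ℝ) / 2) := by
          rw [Real.div_rpow (by positivity) hB'.le, neg_div, Real.rpow_neg hB'.le, div_inv_eq_mul,
            mul_comm]
  · intro j r hr
    set F := (P ^ ((L + N) * j)) f with hF
    have hnext : (P ^ ((L + N) * (j + 1))) f = (P ^ (L + N)) F := by
      rw [hF, ← Module.End.mul_apply, ← pow_add]; congr 2; ring
    simp only [hnext]
    have hFfin : F.HasFiniteSupport := (H.pow _).finite f hffin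
    have hF0 : 0 ≤ F := (H.pow _).nonneg f hf0
    set g : Zd d → ℝ := fun x => ∑ r ∈ Finset.range L, (P ^ r) F x with hg
    have hPF0 : ∀ r x, 0 ≤ (P ^ r) F x := fun r x => (H.pow r).nonneg F hF0 x
    have hPFfin : ∀ r, ((P ^ r) F).HasFiniteSupport := fun r => (H.pow r).finite F hFfin
    have hgfin : g.HasFiniteSupport := by
      have : g = ∑ r ∈ Finset.range L, (P ^ r) F := by ext x; simp [g]
      rw [this]
      exact Finset.sum_induction _ (fun h : Zd d → ℝ => h.HasFiniteSupport)
        (fun _ _ h₁ h₂ => h₁.add h₂) Function.hasFiniteSupport_zero fun r _ => hPFfin r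
    have hg0 : ∀ x, 0 ≤ g x := fun x => Finset.sum_nonneg fun r _ => hPF0 r x
    have hFg : ∀ x, F x ≤ g x := fun x => by
      simpa using Finset.single_le_sum (f := fun r => (P ^ r) F x) (fun r _ => hPF0 r x)
        (Finset.mem_range.mpr hL)
    have hmass : ∀ r, ∑' x, (P ^ r) F x ≤ C / c := by
      intro r
      have h1 : ∑' x, μ x * (P ^ r) F x = μ y := by
        rw [(H.pow r).tsum_apply hFfin, hF, (H.pow _).tsum_apply hffin, tsum_mul_single]
      rw [le_div_iff₀ hc, mul_comm, ← tsum_mul_left]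
      refine le_trans ?_ (h1.le.trans (hμC y))
      exact ((summable_of_hasFiniteSupport (hPFfin r)).mul_left c).tsum_le_tsum
        (fun x => mul_le_mul_of_nonneg_right (hμc x) (hPF0 r x))
        (summable_of_hasFiniteSupport (Function.HasFiniteSupport.mul_right _ (hPFfin r)))
    have hgmass : ∑' x, g x ≤ L * (C / c) := by
      rw [hg, Summable.tsum_finsetSum fun r _ => summable_of_hasFiniteSupport (hPFfin r)]
      refine (Finset.sum_le_sum fun r _ => hmass r).trans ?_
      simp
    have hgmass0 : 0 ≤ ∑' x, g x := tsum_nonneg hg0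
    have hnash := nash_inequality hr hgfin hg0
    set Δ := normSqW μ F - normSqW μ ((P ^ (L + N)) F) with hΔ
    have hΔ0 : 0 ≤ Δ := sub_nonneg.mpr ((H.pow _).normSqW_apply_le hμ0 hFfin)
    have hD : ∑ i, incr g (Pi.single i 1) ≤ d * (K₀ * Δ) := by
      refine (Finset.sum_le_sum fun i _ =>
        H.incr_sum_pow_le hc hμc hκ hlazy (Pi.single i 1) (hirr i) hFfin).trans ?_
      simp [hK₀, hΔ]
    have hFsq : normSqW μ F ≤ C * ∑' x, g x ^ 2 := by
      rw [normSqW, ← tsum_mul_left]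
      refine (summable_of_hasFiniteSupport
        (Function.HasFiniteSupport.mul_right _ (hasFiniteSupport_sq hFfin))).tsum_le_tsum
        (fun x => ?_) ((summable_of_hasFiniteSupport (hasFiniteSupport_sq hgfin)).mul_left C)
      exact mul_le_mul (hμC x) (pow_le_pow_left₀ (hF0 x) (hFg x) 2) (sq_nonneg _) hC.le
    calc normSqW μ F ≤ C * ∑' x, g x ^ 2 := hFsq
      _ ≤ C * (2 * d * (r : ℝ) ^ 2 * (d * (K₀ * Δ))
          + 2 * ((r : ℝ) ^ d)⁻¹ * (L * (C / c)) ^ 2) := by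
          gcongr
          refine hnash.trans ?_
          gcongr
      _ = C * (2 * d * (d * K₀)) * (r : ℝ) ^ 2 * Δ + b * ((r : ℝ) ^ d)⁻¹ := by rw [hb]; ring
      _ ≤ (1 + C * (2 * d * (d * K₀))) * (r : ℝ) ^ 2 * Δ + b * ((r : ℝ) ^ d)⁻¹ := by
          gcongr
          linarith

/-- Uniform on-diagonal heat kernel bound. -/
lemma exists_pow_apply_single_le (d L N : ℕ) (hd : 0 < d) (hL : 0 < L) {c C κ : ℝ} (hc : 0 < c)
    (hcC : c ≤ C) (hκ : 0 < κ) :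
    ∃ A : ℝ, 0 < A ∧ ∀ (μ : Zd d → ℝ) (P P' : Module.End ℝ (Zd d → ℝ)), IsMarkovPair μ P P' →
      (∀ x, c ≤ μ x) → (∀ x, μ x ≤ C) → (∀ x, κ ≤ (P ^ L) (Pi.single x 1) x) →
      (∀ (e : Zd d) (x : Zd d), (∃ i, e = Pi.single i 1 ∨ e = -Pi.single i 1) →
        ∃ k ≤ N, κ ≤ (P ^ k) (Pi.single (x + e) 1) x) →
      ∀ (n : ℕ), 1 ≤ n → ∀ x y : Zd d,
        (P ^ n) (Pi.single y 1) x ≤ A * μ y * (n : ℝ) ^ (-(d : ℝ) / 2) := by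
  have hC : 0 < C := hc.trans_le hcC
  set κ' : ℝ := κ * (c / C) with hκ'
  have hκ'0 : 0 < κ' := by positivity
  have hκ'κ : κ' ≤ κ := by
    rw [hκ']; exact mul_le_of_le_one_right hκ.le ((div_le_one hC).mpr hcC)
  obtain ⟨A, hA, hdecay⟩ := exists_normSqW_pow_decay d L N hd hL hc hcC hκ'0
  refine ⟨A * (1 / 2 : ℝ) ^ (-(d : ℝ) / 2) / c / c, by positivity,
    fun μ P P' H hμc hμC hlazy hirr n hn x y => ?_⟩
  have hμ0 : ∀ x, 0 < μ x := fun x => hc.trans_le (hμc x)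
  have hP := hdecay μ P P' H hμc hμC (fun x => hκ'κ.trans (hlazy x)) fun i x => by
    obtain ⟨k, hk, h⟩ := hirr (Pi.single i 1) x ⟨i, Or.inl rfl⟩
    exact ⟨k, hk, hκ'κ.trans h⟩
  have hP' := hdecay μ P' P H.symm hμc hμC
    (fun x => by
      have := (H.pow L).mul_apply_single x x
      rw [← mul_left_cancel₀ (hμ0 x).ne' this]
      exact hκ'κ.trans (hlazy x))
    fun i x => by
      obtain ⟨k, hk, h⟩ := hirr (-Pi.single i 1) (x + Pi.single i 1) ⟨i, Or.inr rfl⟩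
      rw [add_neg_cancel_right] at h
      refine ⟨k, hk, ?_⟩
      have h1 := (H.pow k).mul_apply_single (x + Pi.single i 1) x
      rw [hκ', ← mul_div_assoc, div_le_iff₀ hC]
      have h0 : 0 ≤ (P' ^ k) (Pi.single (x + Pi.single i 1) 1) x :=
        (H.pow k).nonneg' _ (by simp) x
      calc κ * c ≤ (P ^ k) (Pi.single x 1) (x + Pi.single i 1) * μ (x + Pi.single i 1) := by
            gcongr
            exacts [hκ.le.trans h, hμc _]
        _ = μ x * (P' ^ k) (Pi.single (x + Pi.single i 1) 1) x := by rw [mul_comm, h1]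
        _ ≤ _ := by rw [mul_comm]; exact mul_le_mul_of_nonneg_left (hμC x) h0
  set a := n / 2 with ha
  set b := n - a with hb
  set F := (P' ^ a) (Pi.single x 1) with hF
  set G := (P ^ b) (Pi.single y 1) with hG
  have hFfin : F.HasFiniteSupport := (H.pow a).finite' _ (hasFiniteSupport_single x 1)
  have hGfin : G.HasFiniteSupport := (H.pow b).finite _ (hasFiniteSupport_single y 1)
  have hsplit : μ x * (P ^ n) (Pi.single y 1) x = ∑' w, μ w * (F w * G w) := by
    have hn' : (P ^ n) (Pi.single y 1) = (P ^ a) G := by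
      rw [hG, ← Module.End.mul_apply, ← pow_add]; congr 2; omega
    have h1 := (H.pow a).adjoint (Pi.single x 1) G (Or.inr hGfin)
    rw [hF, ← h1, hn', ← tsum_mul_single (fun w => μ w * (P ^ a) G w) x]
    exact tsum_congr fun w => by ring
  have hsF : Summable fun w => μ w * F w ^ 2 := summable_of_hasFiniteSupport
    (Function.HasFiniteSupport.mul_right _ (hasFiniteSupport_sq hFfin))
  have hsG : Summable fun w => μ w * G w ^ 2 := summable_of_hasFiniteSupport
    (Function.HasFiniteSupport.mul_right _ (hasFiniteSupport_sq hGfin))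
  have hamgm : ∑' w, μ w * (F w * G w) ≤ 1 / 2 * (normSqW μ F + normSqW μ G) := by
    rw [normSqW, normSqW, ← hsF.tsum_add hsG, ← tsum_mul_left]
    refine (summable_of_hasFiniteSupport (Function.HasFiniteSupport.mul_right _
      (Function.HasFiniteSupport.mul_right _ hGfin))).tsum_le_tsum (fun w => ?_)
      ((hsF.add hsG).mul_left _)
    nlinarith [mul_nonneg (hμ0 w).le (sq_nonneg (F w - G w))]
  have hn0 : (0 : ℝ) < n := by exact_mod_cast hn
  have hhalf : ∀ k : ℕ, n ≤ 2 * (k + 1) →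
      ((k : ℝ) + 1) ^ (-(d : ℝ) / 2) ≤ (1 / 2 : ℝ) ^ (-(d : ℝ) / 2) * (n : ℝ) ^ (-(d : ℝ) / 2) := by
    intro k hk
    rw [← Real.mul_rpow (by norm_num) hn0.le]
    refine Real.rpow_le_rpow_of_nonpos (by positivity) ?_ ?_
    · have : (n : ℝ) ≤ 2 * ((k : ℝ) + 1) := by exact_mod_cast hk
      linarith
    · rw [neg_div]; exact neg_nonpos.mpr (by positivity)
  have hFb := (hP' x a).trans (mul_le_mul_of_nonneg_left (hhalf a (by omega)) hA.le)
  have hGb := (hP y b).trans (mul_le_mul_of_nonneg_left (hhalf b (by omega)) hA.le)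
  set θ := A * ((1 / 2 : ℝ) ^ (-(d : ℝ) / 2) * (n : ℝ) ^ (-(d : ℝ) / 2)) with hθ
  have hθ0 : 0 ≤ θ := by positivity
  have hfin : μ x * (P ^ n) (Pi.single y 1) x ≤ θ := by
    rw [hsplit]; linarith
  have hp0 : 0 ≤ (P ^ n) (Pi.single y 1) x := (H.pow n).nonneg _ (by simp) x
  have h1 : (P ^ n) (Pi.single y 1) x ≤ θ / c := by
    rw [le_div_iff₀ hc, mul_comm]
    exact (mul_le_mul_of_nonneg_right (hμc x) hp0).trans hfin
  have h2 : θ / c ≤ θ / c * (μ y / c) :=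
    le_mul_of_one_le_right (by positivity) ((one_le_div hc).mpr (hμc y))
  refine h1.trans (h2.trans (le_of_eq ?_))
  rw [hθ]; ring

/-- The finite-range operator `f ↦ μ⁻¹ ∑ⱼ aⱼ f(· + sⱼ)`. -/
def stepOp {d : ℕ} {ι : Type*} [Fintype ι] (μ : Zd d → ℝ) (a : ι → Zd d → ℝ) (s : ι → Zd d) :
    Module.End ℝ (Zd d → ℝ) where
  toFun f x := (μ x)⁻¹ * ∑ j, a j x * f (x + s j)
  map_add' f g := by
    ext x
    simp [mul_add, Finset.sum_add_distrib]
  map_smul' t f := by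
    ext x
    simp only [Pi.smul_apply, smul_eq_mul, RingHom.id_apply, Finset.mul_sum]
    exact Finset.sum_congr rfl fun j _ => by ring

lemma stepOp_apply {d : ℕ} {ι : Type*} [Fintype ι] (μ : Zd d → ℝ) (a : ι → Zd d → ℝ)
    (s : ι → Zd d) (f : Zd d → ℝ) (x : Zd d) :
    stepOp μ a s f x = (μ x)⁻¹ * ∑ j, a j x * f (x + s j) := rfl

lemma stepOp_nonneg {d : ℕ} {ι : Type*} [Fintype ι] {μ : Zd d → ℝ} {a : ι → Zd d → ℝ}
    {s : ι → Zd d} (hμ : ∀ x, 0 < μ x) (ha : ∀ j x, 0 ≤ a j x) (f : Zd d → ℝ) (hf : 0 ≤ f) :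
    0 ≤ stepOp μ a s f := fun x =>
  mul_nonneg (inv_nonneg.mpr (hμ x).le) (Finset.sum_nonneg fun j _ => mul_nonneg (ha j x) (hf _))

lemma stepOp_one {d : ℕ} {ι : Type*} [Fintype ι] {μ : Zd d → ℝ} {a : ι → Zd d → ℝ}
    {s : ι → Zd d} (hμ : ∀ x, 0 < μ x) (hrow : ∀ x, ∑ j, a j x = μ x) :
    stepOp μ a s 1 = 1 := by
  ext x
  simp [stepOp_apply, hrow, (hμ x).ne']

lemma hasFiniteSupport_stepOp {d : ℕ} {ι : Type*} [Fintype ι] (μ : Zd d → ℝ) (a : ι → Zd d → ℝ)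
    (s : ι → Zd d) (f : Zd d → ℝ) (hf : f.HasFiniteSupport) :
    (stepOp μ a s f).HasFiniteSupport := by
  have hsum : (∑ j, fun x => a j x * f (x + s j)).HasFiniteSupport :=
    Finset.sum_induction _ (fun h : Zd d → ℝ => h.HasFiniteSupport)
      (fun _ _ h₁ h₂ => h₁.add h₂) Function.hasFiniteSupport_zero fun j _ =>
      Function.HasFiniteSupport.mul_right _ (hasFiniteSupport_comp_add hf (s j))
  have h := Function.HasFiniteSupport.mul_right (fun x => (μ x)⁻¹) hsum
  have e : stepOp μ a s f = (fun x => (μ x)⁻¹) * ∑ j, fun x => a j x * f (x + s j) := by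
    ext x
    simp [stepOp_apply]
  rw [e]
  exact h

lemma isMarkovPair_stepOp {d : ℕ} {ι : Type*} [Fintype ι] {μ : Zd d → ℝ} {a : ι → Zd d → ℝ}
    {s : ι → Zd d} (hμ : ∀ x, 0 < μ x) (ha : ∀ j x, 0 ≤ a j x) (hrow : ∀ x, ∑ j, a j x = μ x)
    (hcol : ∀ x, ∑ j, a j (x - s j) = μ x) :
    IsMarkovPair μ (stepOp μ a s) (stepOp μ (fun j x => a j (x - s j)) fun j => -s j) where
  nonneg := stepOp_nonneg hμ ha
  nonneg' := stepOp_nonneg hμ fun j x => ha j _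
  one := stepOp_one hμ hrow
  one' := stepOp_one hμ hcol
  finite := hasFiniteSupport_stepOp _ _ _
  finite' := hasFiniteSupport_stepOp _ _ _
  adjoint f g h := by
    have hl : ∀ x, μ x * (f x * stepOp μ a s g x) = ∑ j, a j x * (f x * g (x + s j)) := fun x => by
      rw [stepOp_apply, mul_left_comm (f x), mul_inv_cancel_left₀ (hμ x).ne', Finset.mul_sum]
      exact Finset.sum_congr rfl fun j _ => by ring
    have hr : ∀ x, μ x * (stepOp μ (fun j x => a j (x - s j)) (fun j => -s j) f x * g x)
        = ∑ j, a j (x - s j) * (f (x - s j) * g x) := fun x => by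
      rw [stepOp_apply, mul_assoc, mul_inv_cancel_left₀ (hμ x).ne', Finset.sum_mul]
      exact Finset.sum_congr rfl fun j _ => by rw [← sub_eq_add_neg]; ring
    have hfin : ∀ j, (fun x => a j x * (f x * g (x + s j))).HasFiniteSupport := fun j => by
      refine Function.HasFiniteSupport.mul_right _ ?_
      rcases h with h | h
      · exact Function.HasFiniteSupport.mul_left h _
      · exact Function.HasFiniteSupport.mul_right _ (hasFiniteSupport_comp_add h (s j))
    have hshift : ∀ j, (fun x => a j (x - s j) * (f (x - s j) * g x))
        = (fun x => a j x * (f x * g (x + s j))) ∘ Equiv.subRight (s j) := fun j => by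
      ext x; simp
    have hfin' : ∀ j, (fun x => a j (x - s j) * (f (x - s j) * g x)).HasFiniteSupport :=
      fun j => by
        rw [hshift j]
        exact (hfin j).comp_of_injective (Equiv.injective _)
    simp only [hl, hr]
    rw [Summable.tsum_finsetSum fun j _ => summable_of_hasFiniteSupport (hfin j),
      Summable.tsum_finsetSum fun j _ => summable_of_hasFiniteSupport (hfin' j)]
    refine Finset.sum_congr rfl fun j _ => ?_
    rw [hshift j]
    exact ((Equiv.subRight (s j)).tsum_eq fun x => a j x * (f x * g (x + s j))).symm

lemma apply_eq_tsum_single {V : Type*} [DecidableEq V] (R : Module.End ℝ (V → ℝ)) {h : V → ℝ}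
    (hh : h.HasFiniteSupport) (x : V) : R h x = ∑' w, R (Pi.single w 1) x * h w := by
  have hsub : ∀ w ∉ Set.Finite.toFinset hh, h w = 0 := fun w hw => by
    by_contra h0
    exact hw ((Set.Finite.mem_toFinset hh).mpr h0)
  have hdec : h = ∑ w ∈ Set.Finite.toFinset hh, h w • (Pi.single w 1 : V → ℝ) := by
    ext v
    rw [Finset.sum_apply]
    by_cases hv : v ∈ Set.Finite.toFinset hh
    · rw [Finset.sum_eq_single v (fun w _ hw => by simp [hw.symm]) (fun h => absurd hv h)]
      simp
    · rw [hsub v hv, Finset.sum_eq_zero]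
      intro w hw
      have : v ≠ w := fun e => hv (e ▸ hw)
      simp [this]
  rw [tsum_eq_sum (s := Set.Finite.toFinset hh) fun w hw => by rw [hsub w hw, mul_zero]]
  conv_lhs => rw [hdec]
  rw [map_sum, Finset.sum_apply]
  exact Finset.sum_congr rfl fun w _ => by simp [mul_comm]

lemma kerpow_eq_pow_apply {d : ℕ} {Q : Zd d → Zd d → ℝ} {P : Module.End ℝ (Zd d → ℝ)}
    (hfin : ∀ f, f.HasFiniteSupport → (P f).HasFiniteSupport)
    (hQ : ∀ x y, Q x y = P (Pi.single y 1) x) (k : ℕ) (x y : Zd d) :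
    kerpow Q k x y = (P ^ k) (Pi.single y 1) x := by
  induction k generalizing y with
  | zero => simp [kerpow, Pi.single_apply]
  | succ k ih =>
    rw [pow_succ, Module.End.mul_apply,
      apply_eq_tsum_single _ (hfin _ (hasFiniteSupport_single y 1))]
    simp only [kerpow, ih, hQ]

lemma tsum_ite_exists_eq {d N : ℕ} {z : ℕ → Zd d}
    (hinj : ∀ j k, j < N → k < N → z j = z k → j = k) (R : ℕ → Prop) [DecidablePred R]
    (φ : Zd d → ℝ) :
    (∑' w, if ∃ j < N, z j + w = 0 ∧ R j then φ w else 0)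
      = ∑ j : Fin N, if R j then φ (-z j) else 0 := by
  have hpt : ∀ w, (if ∃ j < N, z j + w = 0 ∧ R j then φ w else 0)
      = ∑ j : Fin N, if w = -z j ∧ R j then φ w else 0 := by
    intro w
    split_ifs with h
    · obtain ⟨j, hj, hjw, hR⟩ := h
      have hw : w = -z j := (neg_eq_of_add_eq_zero_right hjw).symm
      rw [Finset.sum_eq_single ⟨j, hj⟩ ?_ (by simp), if_pos ⟨hw, hR⟩]
      intro k _ hk
      refine if_neg fun h => hk (Fin.ext (hinj _ _ k.2 hj ?_))
      exact neg_injective (h.1.symm.trans hw)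
    · symm
      refine Finset.sum_eq_zero fun (j : Fin N) _ => if_neg fun hj => h ⟨j, j.2, ?_, hj.2⟩
      rw [hj.1, add_neg_cancel]
  simp only [hpt]
  have hz : ∀ (j : Fin N) (w : Zd d), w ≠ -z j → (if w = -z j ∧ R j then φ w else 0) = 0 :=
    fun j w hw => if_neg fun h => hw h.1
  have hs : ∀ j : Fin N, Summable fun w => if w = -z j ∧ R j then φ w else 0 :=
    fun j => (hasSum_single (-z j) (hz j)).summable
  rw [Summable.tsum_finsetSum fun j _ => hs j]
  refine Finset.sum_congr rfl fun j _ => ?_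
  rw [tsum_eq_single (-z j) (hz j)]
  simp

/-- The edges of the cycles. -/
abbrev CycleEdge {K : ℕ} (n : Fin K → ℕ) := Σ i : Fin K, Fin (n i)

/-- The weight with which the walk at `x` follows the edge `p` of a translated cycle. -/
def edgeWeight {d K : ℕ} {Ω : Type*} (n : Fin K → ℕ) (z : Fin K → ℕ → Zd d) (T : Zd d → Ω → Ω)
    (W : Fin K → Ω → ℝ) (ω : Ω) (p : CycleEdge n) (x : Zd d) : ℝ :=
  W p.1 (T (x - z p.1 p.2) ω)

/-- The jump along an edge of a cycle. -/
def edgeStep {d K : ℕ} (n : Fin K → ℕ) (z : Fin K → ℕ → Zd d) (p : CycleEdge n) : Zd d :=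
  z p.1 (p.2 + 1) - z p.1 p.2

section Cycles

variable {d K : ℕ} {Ω : Type*} {n : Fin K → ℕ} {z : Fin K → ℕ → Zd d} {T : Zd d → Ω → Ω}
  {W : Fin K → Ω → ℝ}

lemma Mfun_eq_sum_edgeWeight (hinj : ∀ i, ∀ j k, j < n i → k < n i → z i j = z i k → j = k)
    (hT : ∀ x y : Zd d, T (x + y) = T x ∘ T y) (ω : Ω) (x : Zd d) :
    Mfun n z T W (T x ω) = ∑ p, edgeWeight n z T W ω p x := by
  rw [Mfun, Fintype.sum_sigma]
  refine Finset.sum_congr rfl fun i _ => ?_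
  have := tsum_ite_exists_eq (hinj i) (fun _ => True) fun w => W i (T w (T x ω))
  simp only [and_true, if_true] at this
  rw [this]
  refine Finset.sum_congr rfl fun j _ => ?_
  rw [edgeWeight, ← Function.comp_apply (f := T _), ← hT, neg_add_eq_sub]

lemma Qker_eq_stepOp (hinj : ∀ i, ∀ j k, j < n i → k < n i → z i j = z i k → j = k)
    (hT : ∀ x y : Zd d, T (x + y) = T x ∘ T y) (ω : Ω) (x y : Zd d) :
    Qker n z T W ω x y = stepOp (fun x => Mfun n z T W (T x ω)) (edgeWeight n z T W ω)
      (edgeStep n z) (Pi.single y 1) x := by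
  rw [Qker, pfun, stepOp_apply, Fintype.sum_sigma]
  congr 1
  refine Finset.sum_congr rfl fun i _ => ?_
  have hiff : ∀ w, (∃ j, 1 ≤ j ∧ j ≤ n i ∧ z i (j - 1) + w = 0 ∧ z i j + w = y - x)
      ↔ ∃ j < n i, z i j + w = 0 ∧ z i (j + 1) - z i j = y - x := by
    intro w
    constructor
    · rintro ⟨j, h1, h2, h3, h4⟩
      refine ⟨j - 1, by omega, h3, ?_⟩
      rw [Nat.sub_add_cancel h1, ← h4, ← neg_eq_of_add_eq_zero_right h3, sub_eq_add_neg]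
    · rintro ⟨j, h1, h2, h3⟩
      refine ⟨j + 1, by omega, by omega, h2, ?_⟩
      rw [← h3, ← neg_eq_of_add_eq_zero_right h2, sub_eq_add_neg]
  have := tsum_ite_exists_eq (hinj i) (fun j => z i (j + 1) - z i j = y - x)
    fun w => W i (T w (T x ω))
  refine Eq.trans ?_ (this.trans ?_)
  · exact tsum_congr fun w => if_congr (hiff w) rfl rfl
  refine Finset.sum_congr rfl fun j _ => ?_
  rw [edgeWeight, ← Function.comp_apply (f := T _), ← hT, neg_add_eq_sub, edgeStep,
    Pi.single_apply]
  by_cases h : z i (j + 1) - z i j = y - x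
  · simp [h]
  · have : ¬ x + (z i (j + 1) - z i j) = y := fun e => h (by rw [← e]; abel)
    simp [h, this]

lemma sum_edgeWeight_sub_edgeStep (hcyc : ∀ i, z i (n i) = z i 0) (ω : Ω) (x : Zd d) :
    ∑ p, edgeWeight n z T W ω p (x - edgeStep n z p) = ∑ p, edgeWeight n z T W ω p x := by
  rw [Fintype.sum_sigma, Fintype.sum_sigma]
  refine Finset.sum_congr rfl fun i _ => ?_
  simp only [edgeWeight, edgeStep]
  have h1 : ∀ j : ℕ, x - (z i (j + 1) - z i j) - z i j = x - z i (j + 1) := fun j => by abel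
  simp only [h1]
  rw [Fin.sum_univ_eq_sum_range (fun j => W i (T (x - z i (j + 1)) ω)),
    Fin.sum_univ_eq_sum_range (fun j => W i (T (x - z i j) ω))]
  have h2 := Finset.sum_range_succ (fun j => W i (T (x - z i j) ω)) (n i)
  have h3 := Finset.sum_range_succ' (fun j => W i (T (x - z i j) ω)) (n i)
  rw [hcyc i] at h2
  linarith

lemma isMarkovPair_cycles (hcyc : ∀ i, z i (n i) = z i 0)
    (hinj : ∀ i, ∀ j k, j < n i → k < n i → z i j = z i k → j = k)
    (hT : ∀ x y : Zd d, T (x + y) = T x ∘ T y) (hW : ∀ i ω, 0 ≤ W i ω)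
    (hM : ∀ ω, 0 < Mfun n z T W ω) (ω : Ω) :
    IsMarkovPair (fun x => Mfun n z T W (T x ω))
      (stepOp (fun x => Mfun n z T W (T x ω)) (edgeWeight n z T W ω) (edgeStep n z))
      (stepOp (fun x => Mfun n z T W (T x ω))
        (fun p x => edgeWeight n z T W ω p (x - edgeStep n z p)) fun p => -edgeStep n z p) :=
  isMarkovPair_stepOp (fun x => hM _) (fun p x => hW _ _)
    (fun x => (Mfun_eq_sum_edgeWeight hinj hT ω x).symm) fun x => by
      rw [sum_edgeWeight_sub_edgeStep hcyc, ← Mfun_eq_sum_edgeWeight hinj hT]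

end Cycles

lemma IsMarkovPair.pow_apply_single_ge_of_path {V : Type*} [DecidableEq V] {μ : V → ℝ}
    {P P' : Module.End ℝ (V → ℝ)} (H : IsMarkovPair μ P P') {t : ℝ} (ht : 0 ≤ t) (γ : ℕ → V)
    (hγ : ∀ k, t ≤ P (Pi.single (γ (k + 1)) 1) (γ k)) (l k : ℕ) :
    t ^ l ≤ (P ^ l) (Pi.single (γ (k + l)) 1) (γ k) := by
  induction l generalizing k with
  | zero => simp
  | succ l ih =>
    set h := (P ^ l) (Pi.single (γ (k + (l + 1))) 1) with hh
    have h0 : 0 ≤ h := (H.pow l).nonneg _ (by simp)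
    have h1 : t ^ l ≤ h (γ (k + 1)) := by
      have := ih (k + 1)
      rwa [add_assoc, add_comm 1 l] at this
    have h2 : (t ^ l) • (Pi.single (γ (k + 1)) 1 : V → ℝ) ≤ h := by
      intro v
      by_cases hv : v = γ (k + 1)
      · subst hv; simpa using h1
      · simpa [hv] using h0 v
    have h3 := H.mono h2 (γ k)
    rw [map_smul, Pi.smul_apply, smul_eq_mul] at h3
    rw [pow_succ' P, Module.End.mul_apply, pow_succ]
    exact (mul_le_mul_of_nonneg_left (hγ k) (by positivity)).trans h3

/-- Following a heavy cycle through `x` around an appropriate number of times returns to `x` with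
probability bounded below. -/
lemma pow_prod_stepOp_single_ge {d K : ℕ} {Ω : Type*} {n : Fin K → ℕ} {z : Fin K → ℕ → Zd d}
    {T : Zd d → Ω → Ω} {W : Fin K → Ω → ℝ} {c C : ℝ} (hcyc : ∀ i, z i (n i) = z i 0)
    (hinj : ∀ i, ∀ j k, j < n i → k < n i → z i j = z i k → j = k)
    (hT : ∀ x y : Zd d, T (x + y) = T x ∘ T y) (hW : ∀ i ω, 0 ≤ W i ω) (hc : 0 < c)
    (hM : ∀ ω, c ≤ Mfun n z T W ω ∧ Mfun n z T W ω ≤ C) (ω : Ω) (x : Zd d) :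
    (c / Fintype.card (CycleEdge n) / C) ^ (∏ i, n i) ≤
      (stepOp (fun x => Mfun n z T W (T x ω)) (edgeWeight n z T W ω) (edgeStep n z) ^ (∏ i, n i))
        (Pi.single x 1) x := by
  have hM0 : ∀ ω, 0 < Mfun n z T W ω := fun ω => hc.trans_le (hM ω).1
  have hC : 0 < C := hc.trans_le ((hM ω).1.trans (hM ω).2)
  have hH := isMarkovPair_cycles hcyc hinj hT hW hM0 ω
  have hsum := Mfun_eq_sum_edgeWeight (W := W) hinj hT ω x
  have hne : Nonempty (CycleEdge n) := by
    by_contra h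
    rw [not_nonempty_iff] at h
    rw [Finset.univ_eq_empty, Finset.sum_empty] at hsum
    exact (hM0 _).ne' hsum
  obtain ⟨⟨i, j⟩, hp⟩ : ∃ p : CycleEdge n, c / Fintype.card (CycleEdge n)
      ≤ edgeWeight n z T W ω p x := by
    by_contra! h
    have h1 := Finset.sum_lt_sum_of_nonempty (Finset.univ_nonempty (α := CycleEdge n))
      fun p _ => h p
    rw [← hsum, Finset.sum_const, Finset.card_univ, nsmul_eq_mul, mul_div_cancel₀ _
      (by exact_mod_cast Fintype.card_ne_zero)] at h1
    exact absurd (hM (T x ω)).1 (not_le.mpr h1)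
  have hni : 0 < n i := j.pos
  have hmod : ∀ k, z i ((k + 1) % n i) = z i (k % n i + 1) := fun k => by
    rcases (Nat.succ_le_of_lt (Nat.mod_lt k hni)).lt_or_eq with h | h
    · rw [Nat.add_mod, Nat.mod_eq_of_lt (a := 1) (by omega), Nat.mod_eq_of_lt h]
    · rw [Nat.succ_eq_add_one] at h
      rw [h, hcyc, ← Nat.mod_add_mod, h, Nat.mod_self]
  set v := x - z i j with hv
  set γ : ℕ → Zd d := fun k => z i (k % n i) + v with hγ
  have hedge : ∀ k, c / Fintype.card (CycleEdge n) / C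
      ≤ stepOp (fun x => Mfun n z T W (T x ω)) (edgeWeight n z T W ω) (edgeStep n z)
        (Pi.single (γ (k + 1)) 1) (γ k) := by
    intro k
    set q : CycleEdge n := ⟨i, ⟨k % n i, Nat.mod_lt k hni⟩⟩ with hq
    have h1 : edgeWeight n z T W ω q (γ k) = edgeWeight n z T W ω ⟨i, j⟩ x := by
      change W i (T (z i (k % n i) + (x - z i j) - z i (k % n i)) ω) = W i (T (x - z i j) ω)
      rw [add_sub_cancel_left]
    have h2 : γ k + edgeStep n z q = γ (k + 1) := by
      simp only [hγ, hmod, edgeStep, hq]; abel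
    rw [stepOp_apply, div_eq_inv_mul _ C]
    have h3 : c / Fintype.card (CycleEdge n) ≤ ∑ p, edgeWeight n z T W ω p (γ k) *
        (Pi.single (γ (k + 1)) 1 : Zd d → ℝ) (γ k + edgeStep n z p) := by
      refine le_trans ?_ (Finset.single_le_sum (f := fun p => edgeWeight n z T W ω p (γ k) *
        (Pi.single (γ (k + 1)) 1 : Zd d → ℝ) (γ k + edgeStep n z p)) (fun p _ => ?_)
        (Finset.mem_univ q))
      · simpa [h1, h2] using hp
      · refine mul_nonneg (hW _ _) ?_
        rw [Pi.single_apply]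
        split_ifs <;> norm_num
    refine mul_le_mul ?_ h3 (by positivity) (inv_nonneg.mpr (hM0 _).le)
    exact inv_anti₀ (hM0 _) (hM _).2
  have hpath := hH.pow_apply_single_ge_of_path (by positivity) γ hedge (∏ i, n i) j
  have hj : γ j = x := by simp [hγ, hv, Nat.mod_eq_of_lt j.2]
  have hj' : γ (j + ∏ i, n i) = x := by
    obtain ⟨q, hq⟩ := Finset.dvd_prod_of_mem n (Finset.mem_univ i)
    rw [← hj]
    simp only [hγ]
    rw [hq, Nat.add_mul_mod_self_left]
  rwa [hj, hj'] at hpath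

lemma eucNorm_single {d : ℕ} (i : Fin d) : eucNorm (Pi.single i 1 : Zd d) = 1 := by
  rw [eucNorm, Finset.sum_eq_single i (fun k _ hk => by simp [hk]) (by simp)]
  simp

lemma eucNorm_neg {d : ℕ} (v : Zd d) : eucNorm (-v) = eucNorm v := by
  simp [eucNorm]

theorem quenched_ondiagonal_upper_bound
    (d K : ℕ) (hd : 0 < d) (hK : 0 < K) (Ω : Type*)
    (n : Fin K → ℕ) (z : Fin K → ℕ → Zd d)
    (T : Zd d → Ω → Ω) (W : Fin K → Ω → ℝ) (c C : ℝ)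
    (hlen : ∀ i, 0 < n i)
    (hcyc : ∀ i, z i (n i) = z i 0)
    (hinj : ∀ i, ∀ j k, j < n i → k < n i → z i j = z i k → j = k)
    (hT : ∀ x y : Zd d, T (x + y) = T x ∘ T y) (hT0 : T 0 = id)
    (hW : ∀ i ω, 0 ≤ W i ω)
    (hc : 0 < c) (hCfin : c ≤ C)
    (hM : ∀ ω, c ≤ Mfun n z T W ω ∧ Mfun n z T W ω ≤ C)
    (ε : ℝ) (N : ℕ) (hε : 0 < ε)
    (hirr : ∀ (x : Zd d) (ω : Ω) (e : Zd d), eucNorm e = 1 →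
      ∃ m ≤ N, ε ≤ kerpow (Qker n z T W ω) m x (x + e)) :
    ∃ C₁ : ℝ, 0 < C₁ ∧ ∀ (ω : Ω) (m : ℕ), 1 ≤ m → ∀ x y : Zd d,
      kerpow (Qker n z T W ω) m x y
        ≤ C₁ * Mfun n z T W (T y ω) * (m : ℝ) ^ (-(d : ℝ) / 2) := by
  have hM0 : ∀ ω, 0 < Mfun n z T W ω := fun ω => hc.trans_le (hM ω).1
  have hC : 0 < C := hc.trans_le hCfin
  have hcard : 0 < Fintype.card (CycleEdge n) :=
    Fintype.card_pos_iff.mpr ⟨⟨⟨0, hK⟩, ⟨0, hlen _⟩⟩⟩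
  have hcard' : (0 : ℝ) < Fintype.card (CycleEdge n) := by exact_mod_cast hcard
  set δ : ℝ := (c / Fintype.card (CycleEdge n) / C) ^ (∏ i, n i) with hδ
  have hδ0 : 0 < δ := by positivity
  obtain ⟨A, hA, hbound⟩ := exists_pow_apply_single_le d (∏ i, n i) N hd
    (Finset.prod_pos fun i _ => hlen i) hc hCfin (lt_min hε hδ0)
  refine ⟨A, hA, fun ω m hm x y => ?_⟩
  have hH := isMarkovPair_cycles hcyc hinj hT hW hM0 ω
  have hker := kerpow_eq_pow_apply hH.finite (Qker_eq_stepOp (W := W) hinj hT ω)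
  rw [hker]
  refine hbound _ _ _ hH (fun x => (hM _).1) (fun x => (hM _).2)
    (fun x => (min_le_right _ _).trans (pow_prod_stepOp_single_ge hcyc hinj hT hW hc hM ω x))
    (fun e x he => ?_) m hm x y
  have hnorm : eucNorm e = 1 := by
    obtain ⟨i, rfl | rfl⟩ := he
    · exact eucNorm_single i
    · rw [eucNorm_neg, eucNorm_single]
  obtain ⟨k, hk, h⟩ := hirr x ω e hnorm
  rw [hker] at h
  exact ⟨k, hk, (min_le_left _ _).trans h⟩

end
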